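/- arXiv:2103.16266 — 2 statements merged into one kernel-verified Lean document; each statement's English description precedes it below -/
import Mathlib

section
/- Let C be a conjugation on the complex Hilbert space K and let S be a bounded ℂ-linear operator on K with S♭ = S. Then the spectrum σ(S) is conjugate symmetric: for every λ ∈ ℂ, λ ∈ σ(S) if and only if conj(λ) ∈ σ(S). -/
open scoped InnerProductSpace ComplexConjugate

/-- A conjugation on a complex Hilbert space `K`. -/
structure IsConjugation {K : Type*} [NormedAddCommGroup K] [InnerProductSpace ℂ K]
    (C : K → K) : Prop where
  map_add : ∀ x y : K, C (x + y) = C x + C y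
  map_smul : ∀ (a : ℂ) (x : K), C (a • x) = (conj a) • C x
  invol : ∀ x : K, C (C x) = x
  inner_map : ∀ x y : K, ⟪C x, C y⟫_ℂ = conj ⟪x, y⟫_ℂ

/-! A conjugation is a conjugate-linear isometry, so `S ↦ C ∘ S ∘ C` is a ring automorphism of the
bounded operators. It sends the scalar `z` to `conj z`, hence carries `σ(S)` onto its complex
conjugate; an operator fixed by it has a conjugate symmetric spectrum. -/

theorem mem_spectrum_map_ringEquiv_iff {R S A B : Type*} [CommSemiring R] [CommSemiring S]
    [Ring A] [Ring B] [Algebra R A] [Algebra S B] (φ : A ≃+* B) {r : R} {s : S}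
    (hrs : φ (algebraMap R A r) = algebraMap S B s) (a : A) :
    s ∈ spectrum S (φ a) ↔ r ∈ spectrum R a := by
  rw [spectrum.mem_iff, spectrum.mem_iff, ← hrs, ← map_sub, MulEquiv.isUnit_map]

section RingEquiv

variable {R₁ R₂ E F : Type*} [Semiring R₁] [Semiring R₂]
  [TopologicalSpace E] [AddCommMonoid E] [ContinuousAdd E] [Module R₁ E]
  [TopologicalSpace F] [AddCommMonoid F] [ContinuousAdd F] [Module R₂ F]
  {σ : R₁ →+* R₂} {σ' : R₂ →+* R₁} [RingHomInvPair σ σ'] [RingHomInvPair σ' σ]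

/-- The isomorphism `T ↦ e ∘ T ∘ e⁻¹` between the rings of continuous endomorphisms induced by a
continuous semilinear equivalence `e`. It is the semilinear counterpart of
`ContinuousLinearEquiv.conjContinuousAlgEquiv`, and only a ring isomorphism because `e` twists
scalars. -/
def semilinearConjRingEquiv (e : E ≃SL[σ] F) : (E →L[R₁] E) ≃+* (F →L[R₂] F) where
  __ := e.arrowCongrEquiv e
  map_mul' _ _ := by ext; simp
  map_add' _ _ := by ext; simp

@[simp]
theorem semilinearConjRingEquiv_apply_apply (e : E ≃SL[σ] F) (T : E →L[R₁] E) (x : F) :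
    semilinearConjRingEquiv e T x = e (T (e.symm x)) :=
  rfl

end RingEquiv

section Spectrum

variable {R₁ R₂ E F : Type*}
  [TopologicalSpace E] [AddCommGroup E] [IsTopologicalAddGroup E]
  [TopologicalSpace F] [AddCommGroup F] [IsTopologicalAddGroup F]

theorem semilinearConjRingEquiv_algebraMap [CommSemiring R₁] [CommSemiring R₂]
    [Module R₁ E] [Module R₂ F] [ContinuousConstSMul R₁ E] [ContinuousConstSMul R₂ F]
    {σ : R₁ →+* R₂} {σ' : R₂ →+* R₁} [RingHomInvPair σ σ'] [RingHomInvPair σ' σ]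
    (e : E ≃SL[σ] F) (r : R₁) :
    semilinearConjRingEquiv e (algebraMap R₁ (E →L[R₁] E) r) =
      algebraMap R₂ (F →L[R₂] F) (σ r) := by
  ext
  simp [Algebra.algebraMap_eq_smul_one]

theorem map_mem_spectrum_semilinearConjRingEquiv_iff [CommRing R₁] [CommRing R₂]
    [Module R₁ E] [Module R₂ F] [ContinuousConstSMul R₁ E] [ContinuousConstSMul R₂ F]
    {σ : R₁ →+* R₂} {σ' : R₂ →+* R₁} [RingHomInvPair σ σ'] [RingHomInvPair σ' σ]
    (e : E ≃SL[σ] F) (T : E →L[R₁] E) {r : R₁} :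
    σ r ∈ spectrum R₂ (semilinearConjRingEquiv e T) ↔ r ∈ spectrum R₁ T :=
  mem_spectrum_map_ringEquiv_iff _ (semilinearConjRingEquiv_algebraMap e r) T

end Spectrum

namespace IsConjugation

variable {K : Type*} [NormedAddCommGroup K] [InnerProductSpace ℂ K] {C : K → K}

theorem norm_map (hC : IsConjugation C) (x : K) : ‖C x‖ = ‖x‖ := by
  have hsq : ((‖C x‖ ^ 2 : ℝ) : ℂ) = (‖x‖ ^ 2 : ℝ) := by
    simpa [inner_self_eq_norm_sq_to_K] using hC.inner_map x x
  exact (sq_eq_sq₀ (norm_nonneg _) (norm_nonneg _)).mp (Complex.ofReal_injective hsq)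

/-- A conjugation bundled as a conjugate-linear isometric equivalence, the form in which the
library's semilinear maps apply to it. -/
def toLinearIsometryEquiv (hC : IsConjugation C) : K ≃ₛₗᵢ[starRingEnd ℂ] K where
  toLinearEquiv := .ofInvolutive
    { toFun := C, map_add' := hC.map_add, map_smul' := hC.map_smul } hC.invol
  norm_map' := hC.norm_map

/-- The operator `S♭ = C ∘ S ∘ C`, encoded as `C ∘ S ∘ C⁻¹` since `C` is an involution. -/
def flat (hC : IsConjugation C) (S : K →L[ℂ] K) : K →L[ℂ] K :=
  semilinearConjRingEquiv hC.toLinearIsometryEquiv.toContinuousLinearEquiv S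

theorem flat_apply (hC : IsConjugation C) (S : K →L[ℂ] K) (ξ : K) :
    hC.flat S ξ = C (S (C ξ)) :=
  rfl

theorem conj_mem_spectrum_flat_iff (hC : IsConjugation C) (S : K →L[ℂ] K) {z : ℂ} :
    conj z ∈ spectrum ℂ (hC.flat S) ↔ z ∈ spectrum ℂ S :=
  map_mem_spectrum_semilinearConjRingEquiv_iff _ S

end IsConjugation

theorem spectrum_conjugate_symmetric_general
    {K : Type*} [NormedAddCommGroup K] [InnerProductSpace ℂ K]
    {C : K → K} (hC : IsConjugation C) (S : K →L[ℂ] K)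
    (hflat : ∀ ξ : K, C (S (C ξ)) = S ξ) (z : ℂ) :
    z ∈ spectrum ℂ S ↔ conj z ∈ spectrum ℂ S := by
  have flat_eq : hC.flat S = S := by
    ext ξ
    rw [hC.flat_apply, hflat]
  rw [← hC.conj_mem_spectrum_flat_iff, flat_eq]

/-- Let `C` be a conjugation on the complex Hilbert space `K` and let `S` be
a bounded `ℂ`-linear operator on `K` with `S♭ = S`.  Then the spectrum of `S` is conjugate
symmetric: `λ ∈ σ(S) ↔ conj λ ∈ σ(S)`. -/
theorem spectrum_conjugate_symmetric
    {K : Type*} [NormedAddCommGroup K] [InnerProductSpace ℂ K] [CompleteSpace K]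
    {C : K → K} (hC : IsConjugation C) (S : K →L[ℂ] K)
    (hflat : ∀ ξ : K, C (S (C ξ)) = S ξ) :
    ∀ z : ℂ, z ∈ spectrum ℂ S ↔ (conj z) ∈ spectrum ℂ S :=
  spectrum_conjugate_symmetric_general hC S hflat
end

section
/- Let C be a conjugation on the complex Hilbert space K, let S be a bounded normal operator on K with S♭ = S, and let E be the spectral measure of S on 𝔖 = σ(S). For each bounded Borel E-stem function f set Φ(f) := f(S)|H, a bounded ℝ-linear operator on the real Hilbert space H. Then: Φ is ℝ-linear, multiplicative (Φ(fg) = Φ(f)Φ(g)) and unital; Φ(conj f) = Φ(f)* (adjoint taken on the real Hilbert space H) and each Φ(f) is a normal operator on H; for every polynomial p(z) = Σ_{j=1}^n a_j z^j with real coefficients a_j one has Φ(p) = Σ_{j=1}^n a_j T^j where T := S|H; and ‖Φ(f)x‖² = ∫_𝔖 |f|² dμ_{x,x} for every x ∈ H, where μ_{x,y}(A) = ⟨E(A)x, y⟩. -/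
open MeasureTheory
open scoped InnerProductSpace ComplexConjugate ENNReal

/-- A (projection-valued) spectral measure on the Borel subsets of the set `𝔖 ⊆ ℂ`,
together with the family `μ` of its associated diagonal scalar measures
`μ ξ (A) = ⟨E(A)ξ, ξ⟩`. -/
structure IsSpectralMeasure {K : Type*} [NormedAddCommGroup K] [InnerProductSpace ℂ K]
    [CompleteSpace K] (𝔖 : Set ℂ) (E : Set ℂ → K →L[ℂ] K) (μ : K → Measure ℂ) : Prop where
  selfAdjoint : ∀ A : Set ℂ, MeasurableSet A → A ⊆ 𝔖 → IsSelfAdjoint (E A)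
  empty : E ∅ = 0
  univ : E 𝔖 = 1
  inter : ∀ A B : Set ℂ, MeasurableSet A → MeasurableSet B → A ⊆ 𝔖 → B ⊆ 𝔖 →
    E (A ∩ B) = E A ∘L E B
  countablyAdditive : ∀ (ξ η : K) (A : ℕ → Set ℂ), (∀ n, MeasurableSet (A n)) →
    (∀ n, A n ⊆ 𝔖) → Pairwise (Function.onFun Disjoint A) →
    HasSum (fun n => ⟪η, E (A n) ξ⟫_ℂ) ⟪η, E (⋃ n, A n) ξ⟫_ℂ
  measure_eq : ∀ (ξ : K) (A : Set ℂ), MeasurableSet A → A ⊆ 𝔖 →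
    μ ξ A = ENNReal.ofReal (⟪ξ, E A ξ⟫_ℂ).re
  measure_compl : ∀ ξ : K, μ ξ 𝔖ᶜ = 0

/-- The polarized integral `∫_𝔖 f dμ_{ξ,η}` of `f` against the complex measure
`μ_{ξ,η}(A) = ⟨E(A)ξ, η⟩`, expressed through the four diagonal (positive) measures. -/
noncomputable def specInt {K : Type*} [NormedAddCommGroup K] [InnerProductSpace ℂ K]
    (μ : K → Measure ℂ) (f : ℂ → ℂ) (ξ η : K) : ℂ :=
  (4 : ℂ)⁻¹ * (((∫ z, f z ∂(μ (ξ + η))) - ∫ z, f z ∂(μ (ξ - η)))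
    + Complex.I * ((∫ z, f z ∂(μ (ξ + Complex.I • η))) - ∫ z, f z ∂(μ (ξ - Complex.I • η))))

/-- The image `A^c = {conj z : z ∈ A}` of a subset of `ℂ` under complex conjugation. -/
def conjSet (A : Set ℂ) : Set ℂ := (fun z => conj z) '' A

/-- A bounded Borel function on `𝔖`. -/
def BddBorelOn (𝔖 : Set ℂ) (f : ℂ → ℂ) : Prop :=
  Measurable f ∧ ∃ M : ℝ, ∀ z ∈ 𝔖, ‖f z‖ ≤ M

/-- An `E`-stem function on `𝔖`: `f(conj z) = conj (f z)` off an `E`-null Borel set. -/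
def IsStemFun {K : Type*} [NormedAddCommGroup K] [InnerProductSpace ℂ K] [CompleteSpace K]
    (𝔖 : Set ℂ) (E : Set ℂ → K →L[ℂ] K) (f : ℂ → ℂ) : Prop :=
  ∃ N : Set ℂ, MeasurableSet N ∧ N ⊆ 𝔖 ∧ E N = 0 ∧
    ∀ z ∈ 𝔖 \ N, f (conj z) = conj (f z)

/-!
Since `μ ξ A = ‖E A ξ‖²`, compressing by a projection restricts the scalar measure:
`μ (E B ξ) = (μ ξ).restrict B`, so `E B * Φ f * E B = Φ (1_B f)`. Splitting `f = 1_B f + 1_Bᶜ f` and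
using `E Bᶜ * E B = 0`, this improves to `Φ f * E B = Φ (1_B f)`, which is multiplicativity against
indicators. Linearity and dominated convergence give multiplicativity against every bounded Borel
function, so `Φ` is a unital `*`-homomorphism, and the norm identity is
`⟪Φ f x, Φ f x⟫ = ⟪x, Φ (|f|²) x⟫`.
-/

open Filter Topology

namespace BddBorelOn

variable {𝔖 : Set ℂ} {f g : ℂ → ℂ}

lemma const (c : ℂ) : BddBorelOn 𝔖 (fun _ => c) :=
  ⟨measurable_const, ‖c‖, fun _ _ => le_rfl⟩

lemma one : BddBorelOn 𝔖 1 :=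
  const 1

lemma id (h𝔖 : Bornology.IsBounded 𝔖) : BddBorelOn 𝔖 (fun z => z) :=
  ⟨measurable_id, h𝔖.exists_norm_le⟩

lemma add (hf : BddBorelOn 𝔖 f) (hg : BddBorelOn 𝔖 g) : BddBorelOn 𝔖 (f + g) := by
  obtain ⟨hf, M, hM⟩ := hf
  obtain ⟨hg, N, hN⟩ := hg
  exact ⟨hf.add hg, M + N, fun z hz => norm_add_le_of_le (hM z hz) (hN z hz)⟩

lemma mul (hf : BddBorelOn 𝔖 f) (hg : BddBorelOn 𝔖 g) : BddBorelOn 𝔖 (f * g) := by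
  obtain ⟨hf, M, hM⟩ := hf
  obtain ⟨hg, N, hN⟩ := hg
  exact ⟨hf.mul hg, M * N, fun z hz => norm_mul_le_of_le (hM z hz) (hN z hz)⟩

lemma star (hf : BddBorelOn 𝔖 f) : BddBorelOn 𝔖 (star f) :=
  ⟨continuous_star.measurable.comp hf.1,
    hf.2.imp fun _ hM z hz => (norm_star (f z)).trans_le (hM z hz)⟩

lemma indicator (hf : BddBorelOn 𝔖 f) {A : Set ℂ} (hA : MeasurableSet A) :
    BddBorelOn 𝔖 (A.indicator f) :=
  ⟨hf.1.indicator hA, hf.2.imp fun _ hM z hz => (norm_indicator_le_norm_self f z).trans (hM z hz)⟩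

lemma simpleFunc (s : SimpleFunc ℂ ℂ) : BddBorelOn 𝔖 s :=
  ⟨s.measurable, s.exists_forall_norm_le.imp fun _ hM z _ => hM z⟩

end BddBorelOn

/-- The bounded Borel functions on `𝔖` as a unital `*`-algebra. Its elements are functions on all
of `ℂ`, bounded only on `𝔖`; no two of them are identified. -/
def boundedBorel (𝔖 : Set ℂ) : StarSubalgebra ℂ (ℂ → ℂ) where
  carrier := {f | BddBorelOn 𝔖 f}
  mul_mem' := BddBorelOn.mul
  add_mem' := BddBorelOn.add
  algebraMap_mem' := BddBorelOn.const
  star_mem' := BddBorelOn.star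

/-- Bounded pointwise convergence on `𝔖` of Borel functions, the mode of convergence in which the
Borel functional calculus is weakly continuous. -/
structure BddTendstoOn (𝔖 : Set ℂ) (F : ℕ → ℂ → ℂ) (f : ℂ → ℂ) : Prop where
  measurable : ∀ n, Measurable (F n)
  norm_le : ∃ M : ℝ, ∀ n, ∀ z ∈ 𝔖, ‖F n z‖ ≤ M
  tendsto : ∀ z ∈ 𝔖, Tendsto (fun n => F n z) atTop (𝓝 (f z))

namespace BddTendstoOn

variable {𝔖 : Set ℂ} {F : ℕ → ℂ → ℂ} {f g : ℂ → ℂ}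

lemma bddBorelOn (hF : BddTendstoOn 𝔖 F f) (n : ℕ) : BddBorelOn 𝔖 (F n) :=
  ⟨hF.measurable n, hF.norm_le.imp fun _ hM => hM n⟩

lemma mul_left (hg : BddBorelOn 𝔖 g) (hF : BddTendstoOn 𝔖 F f) :
    BddTendstoOn 𝔖 (fun n => g * F n) (g * f) := by
  obtain ⟨hgm, M, hM⟩ := hg
  obtain ⟨hFm, ⟨N, hN⟩, hlim⟩ := hF
  exact ⟨fun n => hgm.mul (hFm n), ⟨M * N, fun n z hz => norm_mul_le_of_le (hM z hz) (hN n z hz)⟩,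
    fun z hz => (hlim z hz).const_mul (g z)⟩

end BddTendstoOn

lemma BddBorelOn.exists_simpleFunc_tendsto {𝔖 : Set ℂ} {f : ℂ → ℂ} (hf : BddBorelOn 𝔖 f) :
    ∃ s : ℕ → SimpleFunc ℂ ℂ, BddTendstoOn 𝔖 (fun n => s n) f := by
  obtain ⟨hfm, M, hM⟩ := hf
  refine ⟨SimpleFunc.approxOn f hfm Set.univ 0 (Set.mem_univ 0), fun n => SimpleFunc.measurable _,
    ⟨M + M, fun n z hz => ?_⟩, fun z _ => SimpleFunc.tendsto_approxOn hfm _ (by simp)⟩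
  exact (SimpleFunc.norm_approxOn_zero_le hfm _ z n).trans (add_le_add (hM z hz) (hM z hz))

section

variable {K : Type*} [NormedAddCommGroup K] [InnerProductSpace ℂ K] [CompleteSpace K]
  {𝔖 : Set ℂ} {E : Set ℂ → K →L[ℂ] K} {μ : K → Measure ℂ}

namespace IsSpectralMeasure

lemma ae_mem (hE : IsSpectralMeasure 𝔖 E μ) (ξ : K) : ∀ᵐ z ∂(μ ξ), z ∈ 𝔖 :=
  hE.measure_compl ξ

lemma inner_self_apply (hE : IsSpectralMeasure 𝔖 E μ) {A : Set ℂ} (hA : MeasurableSet A)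
    (hA𝔖 : A ⊆ 𝔖) (ξ : K) : ⟪ξ, E A ξ⟫_ℂ = (‖E A ξ‖ : ℂ) ^ 2 := by
  have idem : E A (E A ξ) = E A ξ := by
    simpa using congr($(hE.inter A A hA hA hA𝔖 hA𝔖) ξ).symm
  calc ⟪ξ, E A ξ⟫_ℂ = ⟪ξ, E A (E A ξ)⟫_ℂ := by rw [idem]
    _ = ⟪E A ξ, E A ξ⟫_ℂ := ((hE.selfAdjoint A hA hA𝔖).isSymmetric ξ (E A ξ)).symm
    _ = (‖E A ξ‖ : ℂ) ^ 2 := inner_self_eq_norm_sq_to_K _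

lemma mul_inter (hE : IsSpectralMeasure 𝔖 E μ) (h𝔖 : MeasurableSet 𝔖) {A B : Set ℂ}
    (hA : MeasurableSet A) (hB : MeasurableSet B) :
    E (A ∩ 𝔖) * E (B ∩ 𝔖) = E (A ∩ B ∩ 𝔖) := by
  rw [Set.inter_inter_distrib_right]
  exact (hE.inter _ _ (hA.inter h𝔖) (hB.inter h𝔖) Set.inter_subset_right
    Set.inter_subset_right).symm

lemma measure_apply (hE : IsSpectralMeasure 𝔖 E μ) (h𝔖 : MeasurableSet 𝔖) (ξ : K) {A : Set ℂ}
    (hA : MeasurableSet A) : μ ξ A = ENNReal.ofReal (‖E (A ∩ 𝔖) ξ‖ ^ 2) := by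
  rw [← measure_inter_conull (hE.measure_compl ξ),
    hE.measure_eq ξ _ (hA.inter h𝔖) Set.inter_subset_right,
    hE.inner_self_apply (hA.inter h𝔖) Set.inter_subset_right]
  norm_cast

lemma isFiniteMeasure (hE : IsSpectralMeasure 𝔖 E μ) (h𝔖 : MeasurableSet 𝔖) (ξ : K) :
    IsFiniteMeasure (μ ξ) :=
  ⟨by rw [hE.measure_apply h𝔖 ξ MeasurableSet.univ]; exact ENNReal.ofReal_lt_top⟩

lemma measure_smul (hE : IsSpectralMeasure 𝔖 E μ) (h𝔖 : MeasurableSet 𝔖) (c : ℂ) (ξ : K) :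
    μ (c • ξ) = ENNReal.ofReal (‖c‖ ^ 2) • μ ξ := by
  ext A hA
  rw [Measure.smul_apply, hE.measure_apply h𝔖 _ hA, hE.measure_apply h𝔖 _ hA, smul_eq_mul,
    ← ENNReal.ofReal_mul (by positivity), map_smul, norm_smul, mul_pow]

lemma measure_apply_inter (hE : IsSpectralMeasure 𝔖 E μ) (h𝔖 : MeasurableSet 𝔖) (ξ : K)
    {B : Set ℂ} (hB : MeasurableSet B) : μ (E (B ∩ 𝔖) ξ) = (μ ξ).restrict B := by
  ext A hA
  rw [Measure.restrict_apply hA, hE.measure_apply h𝔖 _ hA, hE.measure_apply h𝔖 _ (hA.inter hB),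
    ← hE.mul_inter h𝔖 hA hB, mul_apply_eq_comp]

lemma integrable (hE : IsSpectralMeasure 𝔖 E μ) (h𝔖 : MeasurableSet 𝔖) {f : ℂ → ℂ}
    (hf : BddBorelOn 𝔖 f) (ξ : K) : Integrable f (μ ξ) := by
  obtain ⟨hfm, M, hM⟩ := hf
  have := hE.isFiniteMeasure h𝔖 ξ
  exact .of_bound hfm.aestronglyMeasurable M ((hE.ae_mem ξ).mono hM)

lemma specInt_self (hE : IsSpectralMeasure 𝔖 E μ) (h𝔖 : MeasurableSet 𝔖) (f : ℂ → ℂ) (ξ : K) :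
    specInt μ f ξ ξ = ∫ z, f z ∂(μ ξ) := by
  have integral_smul (c : ℂ) :
      ∫ z, f z ∂(μ (c • ξ)) = (Complex.normSq c : ℂ) * ∫ z, f z ∂(μ ξ) := by
    rw [hE.measure_smul h𝔖, integral_smul_measure, ENNReal.toReal_ofReal (by positivity),
      Complex.normSq_eq_norm_sq, Complex.real_smul]
  have add_I : ξ + Complex.I • ξ = (1 + Complex.I) • ξ := by module
  have sub_I : ξ - Complex.I • ξ = (1 - Complex.I) • ξ := by module
  have sub : ξ - ξ = (0 : ℂ) • ξ := by module
  rw [specInt, ← two_smul ℂ ξ, sub, add_I, sub_I]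
  simp only [integral_smul, Complex.normSq_apply]
  norm_num
  ring

lemma tendsto_specInt (hE : IsSpectralMeasure 𝔖 E μ) (h𝔖 : MeasurableSet 𝔖)
    {F : ℕ → ℂ → ℂ} {f : ℂ → ℂ} (hF : BddTendstoOn 𝔖 F f) (ξ η : K) :
    Tendsto (fun n => specInt μ (F n) ξ η) atTop (𝓝 (specInt μ f ξ η)) := by
  obtain ⟨hFm, ⟨M, hM⟩, hlim⟩ := hF
  have tendsto_integral (ζ : K) :
      Tendsto (fun n => ∫ z, F n z ∂(μ ζ)) atTop (𝓝 (∫ z, f z ∂(μ ζ))) := by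
    have := hE.isFiniteMeasure h𝔖 ζ
    exact tendsto_integral_of_dominated_convergence (fun _ => M)
      (fun n => (hFm n).aestronglyMeasurable) (integrable_const M)
      (fun n => (hE.ae_mem ζ).mono (hM n)) ((hE.ae_mem ζ).mono hlim)
  exact (((tendsto_integral _).sub (tendsto_integral _)).add
    (((tendsto_integral _).sub (tendsto_integral _)).const_mul _)).const_mul _

end IsSpectralMeasure

/-- `Φ` assigns to each bounded Borel function `f` on `𝔖` the operator `∫ f dE`, where `E` is a
spectral measure on the Borel set `𝔖` with diagonal measures `μ`. Nothing is required of `Φ f` for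
other functions `f`. -/
structure IsBorelCalculus (𝔖 : Set ℂ) (E : Set ℂ → K →L[ℂ] K) (μ : K → Measure ℂ)
    (Φ : (ℂ → ℂ) → K →L[ℂ] K) : Prop where
  isSpectralMeasure : IsSpectralMeasure 𝔖 E μ
  measurableSet : MeasurableSet 𝔖
  inner_apply : ∀ f : ℂ → ℂ, BddBorelOn 𝔖 f → ∀ ξ η : K, ⟪η, Φ f ξ⟫_ℂ = specInt μ f ξ η

namespace IsBorelCalculus

variable {Φ : (ℂ → ℂ) → K →L[ℂ] K} {f g : ℂ → ℂ}

lemma inner_self_apply (h : IsBorelCalculus 𝔖 E μ Φ) (hf : BddBorelOn 𝔖 f) (ξ : K) :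
    ⟪ξ, Φ f ξ⟫_ℂ = ∫ z, f z ∂(μ ξ) := by
  rw [h.inner_apply f hf, h.isSpectralMeasure.specInt_self h.measurableSet]

lemma eq_of_inner_self_apply (h : IsBorelCalculus 𝔖 E μ Φ) (hf : BddBorelOn 𝔖 f) {A : K →L[ℂ] K}
    (hA : ∀ ξ, ⟪ξ, A ξ⟫_ℂ = ∫ z, f z ∂(μ ξ)) : Φ f = A := by
  refine ContinuousLinearMap.coe_injective ((ext_inner_map _ _).1 fun ξ => ?_)
  simp only [ContinuousLinearMap.coe_coe]
  rw [← inner_conj_symm, h.inner_self_apply hf, ← hA, inner_conj_symm]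

lemma map_add (h : IsBorelCalculus 𝔖 E μ Φ) (hf : BddBorelOn 𝔖 f) (hg : BddBorelOn 𝔖 g) :
    Φ (f + g) = Φ f + Φ g := by
  refine h.eq_of_inner_self_apply (hf.add hg) fun ξ => ?_
  rw [add_apply, inner_add_right, h.inner_self_apply hf, h.inner_self_apply hg]
  exact (integral_add (h.isSpectralMeasure.integrable h.measurableSet hf ξ)
    (h.isSpectralMeasure.integrable h.measurableSet hg ξ)).symm

lemma map_smul (h : IsBorelCalculus 𝔖 E μ Φ) (c : ℂ) (hf : BddBorelOn 𝔖 f) :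
    Φ (c • f) = c • Φ f := by
  refine h.eq_of_inner_self_apply ((boundedBorel 𝔖).smul_mem hf c) fun ξ => ?_
  rw [smul_apply, inner_smul_right, h.inner_self_apply hf]
  exact (integral_const_mul c f).symm

lemma map_star (h : IsBorelCalculus 𝔖 E μ Φ) (hf : BddBorelOn 𝔖 f) :
    Φ (star f) = star (Φ f) := by
  refine h.eq_of_inner_self_apply hf.star fun ξ => ?_
  rw [ContinuousLinearMap.star_eq_adjoint, ContinuousLinearMap.adjoint_inner_right,
    ← inner_conj_symm, h.inner_self_apply hf]
  exact integral_conj.symm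

lemma map_indicator_one (h : IsBorelCalculus 𝔖 E μ Φ) {A : Set ℂ} (hA : MeasurableSet A) :
    Φ (A.indicator 1) = E (A ∩ 𝔖) := by
  refine h.eq_of_inner_self_apply (BddBorelOn.one.indicator hA) fun ξ => ?_
  rw [h.isSpectralMeasure.inner_self_apply (hA.inter h.measurableSet) Set.inter_subset_right,
    integral_indicator hA]
  simp [Measure.real, h.isSpectralMeasure.measure_apply h.measurableSet ξ hA]

lemma map_one (h : IsBorelCalculus 𝔖 E μ Φ) : Φ 1 = 1 := by
  simpa [h.isSpectralMeasure.univ] using h.map_indicator_one MeasurableSet.univ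

lemma map_indicator_eq_compression (h : IsBorelCalculus 𝔖 E μ Φ) (hf : BddBorelOn 𝔖 f)
    {B : Set ℂ} (hB : MeasurableSet B) :
    Φ (B.indicator f) = E (B ∩ 𝔖) * Φ f * E (B ∩ 𝔖) := by
  refine h.eq_of_inner_self_apply (hf.indicator hB) fun ξ => ?_
  have symm := (h.isSpectralMeasure.selfAdjoint (B ∩ 𝔖) (hB.inter h.measurableSet)
    Set.inter_subset_right).isSymmetric
  calc ⟪ξ, E (B ∩ 𝔖) (Φ f (E (B ∩ 𝔖) ξ))⟫_ℂ
      = ⟪E (B ∩ 𝔖) ξ, Φ f (E (B ∩ 𝔖) ξ)⟫_ℂ := (symm _ _).symm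
    _ = ∫ z in B, f z ∂(μ ξ) := by
      rw [h.inner_self_apply hf, h.isSpectralMeasure.measure_apply_inter h.measurableSet ξ hB]
    _ = ∫ z, B.indicator f z ∂(μ ξ) := (integral_indicator hB).symm

lemma map_indicator (h : IsBorelCalculus 𝔖 E μ Φ) (hf : BddBorelOn 𝔖 f) {B : Set ℂ}
    (hB : MeasurableSet B) : Φ (B.indicator f) = Φ f * E (B ∩ 𝔖) := by
  have mul_self : E (B ∩ 𝔖) * E (B ∩ 𝔖) = E (B ∩ 𝔖) := by
    rw [h.isSpectralMeasure.mul_inter h.measurableSet hB hB, Set.inter_self]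
  have compl_mul : E (Bᶜ ∩ 𝔖) * E (B ∩ 𝔖) = 0 := by
    rw [h.isSpectralMeasure.mul_inter h.measurableSet hB.compl hB, Set.compl_inter_self,
      Set.empty_inter, h.isSpectralMeasure.empty]
  have split : Φ f = Φ (B.indicator f) + Φ (Bᶜ.indicator f) := by
    rw [← h.map_add (hf.indicator hB) (hf.indicator hB.compl), Set.indicator_self_add_compl]
  rw [split, h.map_indicator_eq_compression hf hB, h.map_indicator_eq_compression hf hB.compl,
    add_mul]
  simp only [mul_assoc, mul_self, compl_mul, mul_zero, add_zero]

lemma map_mul_simpleFunc (h : IsBorelCalculus 𝔖 E μ Φ) (hf : BddBorelOn 𝔖 f)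
    (s : SimpleFunc ℂ ℂ) : Φ (f * s) = Φ f * Φ s := by
  induction s using SimpleFunc.induction with
  | @const c B hB =>
    have coe_eq : ⇑((SimpleFunc.const ℂ c).piecewise B hB (SimpleFunc.const ℂ 0)) =
        c • B.indicator 1 := by
      ext z
      by_cases hz : z ∈ B <;> simp [hz]
    have mul_eq : f * c • B.indicator 1 = c • B.indicator f := by
      ext z
      by_cases hz : z ∈ B <;> simp [hz, mul_comm]
    rw [coe_eq, mul_eq, h.map_smul c (hf.indicator hB),
      h.map_smul c (BddBorelOn.one.indicator hB), h.map_indicator hf hB,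
      h.map_indicator_one hB, mul_smul_comm]
  | @add s t _ ihs iht =>
    rw [SimpleFunc.coe_add, mul_add, h.map_add (hf.mul (.simpleFunc s)) (hf.mul (.simpleFunc t)),
      h.map_add (.simpleFunc s) (.simpleFunc t), ihs, iht, mul_add]

lemma tendsto_inner_apply (h : IsBorelCalculus 𝔖 E μ Φ) {F : ℕ → ℂ → ℂ} (hf : BddBorelOn 𝔖 f)
    (hF : BddTendstoOn 𝔖 F f) (ξ η : K) :
    Tendsto (fun n => ⟪η, Φ (F n) ξ⟫_ℂ) atTop (𝓝 ⟪η, Φ f ξ⟫_ℂ) := by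
  simp only [h.inner_apply _ (hF.bddBorelOn _), h.inner_apply f hf]
  exact h.isSpectralMeasure.tendsto_specInt h.measurableSet hF ξ η

lemma map_mul (h : IsBorelCalculus 𝔖 E μ Φ) (hf : BddBorelOn 𝔖 f) (hg : BddBorelOn 𝔖 g) :
    Φ (f * g) = Φ f * Φ g := by
  obtain ⟨s, hs⟩ := hg.exists_simpleFunc_tendsto
  ext ξ
  refine ext_inner_left ℂ fun η => ?_
  have lim_mul := h.tendsto_inner_apply (hf.mul hg) (hs.mul_left hf) ξ η
  have lim_comp := h.tendsto_inner_apply hg hs ξ (ContinuousLinearMap.adjoint (Φ f) η)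
  simp only [ContinuousLinearMap.adjoint_inner_left] at lim_comp
  refine tendsto_nhds_unique lim_mul (lim_comp.congr fun n => ?_)
  rw [h.map_mul_simpleFunc hf, mul_apply_eq_comp]

lemma norm_apply_sq (h : IsBorelCalculus 𝔖 E μ Φ) (hf : BddBorelOn 𝔖 f) (ξ : K) :
    ‖Φ f ξ‖ ^ 2 = ∫ z, ‖f z‖ ^ 2 ∂(μ ξ) := by
  have star_mul_self : star f * f = fun z => ((‖f z‖ ^ 2 : ℝ) : ℂ) := by
    ext z
    simpa using Complex.conj_mul' (f z)
  apply Complex.ofReal_injective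
  calc ((‖Φ f ξ‖ ^ 2 : ℝ) : ℂ) = ⟪Φ f ξ, Φ f ξ⟫_ℂ := by
        simp [inner_self_eq_norm_sq_to_K]
    _ = ⟪ξ, Φ (star f * f) ξ⟫_ℂ := by
        rw [h.map_mul hf.star hf, h.map_star hf, mul_apply_eq_comp,
          ContinuousLinearMap.star_eq_adjoint, ContinuousLinearMap.adjoint_inner_right]
    _ = ((∫ z, ‖f z‖ ^ 2 ∂(μ ξ) : ℝ) : ℂ) := by
        rw [h.inner_self_apply (hf.star.mul hf), star_mul_self, integral_complex_ofReal]

/-- The Borel functional calculus as a unital `*`-homomorphism on the bounded Borel functions. -/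
def starAlgHom (h : IsBorelCalculus 𝔖 E μ Φ) : boundedBorel 𝔖 →⋆ₐ[ℂ] (K →L[ℂ] K) :=
  { toFun := fun f => Φ f
    map_one' := h.map_one
    map_mul' := fun f g => h.map_mul f.2 g.2
    map_zero' := by simpa using h.map_smul 0 .one
    map_add' := fun f g => h.map_add f.2 g.2
    commutes' := fun c => by
      rw [Algebra.algebraMap_eq_smul_one, Algebra.algebraMap_eq_smul_one, ← h.map_one]
      exact h.map_smul c .one
    map_star' := fun f => h.map_star f.2 }

lemma isStarNormal (h : IsBorelCalculus 𝔖 E μ Φ) (hf : BddBorelOn 𝔖 f) : IsStarNormal (Φ f) :=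
  IsStarNormal.map (r := (⟨f, hf⟩ : boundedBorel 𝔖)) h.starAlgHom

lemma map_polynomial_eval (h : IsBorelCalculus 𝔖 E μ Φ) (hf : BddBorelOn 𝔖 f)
    (p : Polynomial ℂ) : Φ (fun z => p.eval (f z)) = Polynomial.aeval (Φ f) p := by
  have coe_aeval : (Polynomial.aeval (⟨f, hf⟩ : boundedBorel 𝔖) p : ℂ → ℂ) =
      fun z => p.eval (f z) := by
    ext z
    calc (Polynomial.aeval (⟨f, hf⟩ : boundedBorel 𝔖) p : ℂ → ℂ) z
        = Polynomial.aeval f p z :=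
          congrFun (Polynomial.aeval_subalgebra_coe p (boundedBorel 𝔖).toSubalgebra ⟨f, hf⟩) z
      _ = p.eval (f z) := Polynomial.aeval_fn_apply p f z
  rw [← coe_aeval]
  exact (Polynomial.aeval_algHom_apply h.starAlgHom ⟨f, hf⟩ p).symm

end IsBorelCalculus

theorem bounded_stem_functional_calculus_general (h𝔖 : Bornology.IsBounded 𝔖)
    {Φ : (ℂ → ℂ) → K →L[ℂ] K} (hΦ : IsBorelCalculus 𝔖 E μ Φ) {S : K →L[ℂ] K}
    (hSE : ∀ ξ η : K, ⟪η, S ξ⟫_ℂ = specInt μ (fun z => z) ξ η) :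
    (∀ f g : ℂ → ℂ, BddBorelOn 𝔖 f → BddBorelOn 𝔖 g → ∀ a b : ℂ,
      Φ (fun z => a * f z + b * g z) = a • Φ f + b • Φ g) ∧
    (∀ f g : ℂ → ℂ, BddBorelOn 𝔖 f → BddBorelOn 𝔖 g → Φ (fun z => f z * g z) = Φ f * Φ g) ∧
    Φ (fun _ => 1) = 1 ∧
    (∀ f : ℂ → ℂ, BddBorelOn 𝔖 f →
      Φ (fun z => conj (f z)) = ContinuousLinearMap.adjoint (Φ f)) ∧
    (∀ f : ℂ → ℂ, BddBorelOn 𝔖 f → IsStarNormal (Φ f)) ∧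
    (∀ p : Polynomial ℂ, Φ (fun z => p.eval z) = Polynomial.aeval S p) ∧
    (∀ f : ℂ → ℂ, BddBorelOn 𝔖 f → ∀ ξ : K, ‖Φ f ξ‖ ^ 2 = ∫ z, ‖f z‖ ^ 2 ∂(μ ξ)) := by
  have hid : BddBorelOn 𝔖 (fun z => z) := .id h𝔖
  have map_id : Φ (fun z => z) = S := by
    ext ξ
    exact ext_inner_left ℂ fun η => by rw [hΦ.inner_apply _ hid, hSE]
  refine ⟨fun f g hf hg a b => ?_, fun f g hf hg => hΦ.map_mul hf hg, hΦ.map_one,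
    fun f hf => hΦ.map_star hf, fun f hf => hΦ.isStarNormal hf,
    fun p => map_id ▸ hΦ.map_polynomial_eval hid p, fun f hf => hΦ.norm_apply_sq hf⟩
  rw [← hΦ.map_smul a hf, ← hΦ.map_smul b hg]
  exact hΦ.map_add ((boundedBorel 𝔖).smul_mem hf a) ((boundedBorel 𝔖).smul_mem hg b)

end

/-- **Theorem: bounded Borel functional calculus for real normal operators.**
On the stem functions, the functional calculus `Φ(f) = f(S)|H` is `ℝ`-linear, multiplicative
and unital; `Φ(conj f) = Φ(f)*` and each `Φ(f)` is normal on `H`; for real polynomials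
`p(z) = Σ_{j=1}^n a_j z^j` one has `Φ(p) = Σ a_j T^j` with `T = S|H`; and
`‖Φ(f)x‖² = ∫_𝔖 |f|² dμ_{x,x}` for `x ∈ H`. -/
theorem bounded_stem_functional_calculus
    {K : Type*} [NormedAddCommGroup K] [InnerProductSpace ℂ K] [CompleteSpace K]
    {C : K → K} (hC : IsConjugation C) (S : K →L[ℂ] K)
    (hnormal : (ContinuousLinearMap.adjoint S) ∘L S = S ∘L (ContinuousLinearMap.adjoint S))
    (hflat : ∀ ξ : K, C (S (C ξ)) = S ξ)
    (E : Set ℂ → K →L[ℂ] K) (μ : K → Measure ℂ)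
    (hE : IsSpectralMeasure (spectrum ℂ S) E μ)
    (hSE : ∀ ξ η : K, ⟪η, S ξ⟫_ℂ = specInt μ (fun z => z) ξ η)
    (Φ : (ℂ → ℂ) → K →L[ℂ] K)
    (hΦ : ∀ f : ℂ → ℂ, BddBorelOn (spectrum ℂ S) f →
      ∀ ξ η : K, ⟪η, Φ f ξ⟫_ℂ = specInt μ f ξ η) :
    -- `ℝ`-linearity
    (∀ f g : ℂ → ℂ, BddBorelOn (spectrum ℂ S) f → IsStemFun (spectrum ℂ S) E f →
      BddBorelOn (spectrum ℂ S) g → IsStemFun (spectrum ℂ S) E g → ∀ a b : ℝ, ∀ ξ : K,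
      Φ (fun z => (a : ℂ) * f z + (b : ℂ) * g z) ξ = a • Φ f ξ + b • Φ g ξ) ∧
    -- multiplicativity
    (∀ f g : ℂ → ℂ, BddBorelOn (spectrum ℂ S) f → IsStemFun (spectrum ℂ S) E f →
      BddBorelOn (spectrum ℂ S) g → IsStemFun (spectrum ℂ S) E g → ∀ ξ : K,
      Φ (fun z => f z * g z) ξ = Φ f (Φ g ξ)) ∧
    -- unitality
    (∀ ξ : K, Φ (fun _ => 1) ξ = ξ) ∧
    -- `Φ(conj f) = Φ(f)*` on the real subspace `H`
    (∀ f : ℂ → ℂ, BddBorelOn (spectrum ℂ S) f → IsStemFun (spectrum ℂ S) E f →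
      ∀ u v : K, C u = u → C v = v →
      ⟪Φ (fun z => conj (f z)) u, v⟫_ℂ = ⟪u, Φ f v⟫_ℂ) ∧
    -- each `Φ(f)` is normal on `H`
    (∀ f : ℂ → ℂ, BddBorelOn (spectrum ℂ S) f → IsStemFun (spectrum ℂ S) E f →
      ∀ u : K, C u = u →
      Φ f (Φ (fun z => conj (f z)) u) = Φ (fun z => conj (f z)) (Φ f u)) ∧
    -- real polynomials
    (∀ (n : ℕ) (a : Fin n → ℝ), ∀ ξ : K,
      Φ (fun z => ∑ j : Fin n, (a j : ℂ) * z ^ ((j : ℕ) + 1)) ξ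
        = ∑ j : Fin n, a j • ((S ^ ((j : ℕ) + 1)) ξ)) ∧
    -- the norm identity on `H`
    (∀ f : ℂ → ℂ, BddBorelOn (spectrum ℂ S) f → IsStemFun (spectrum ℂ S) E f →
      ∀ x : K, C x = x → ‖Φ f x‖ ^ 2 = ∫ z, ‖f z‖ ^ 2 ∂(μ x)) := by
  have compact := spectrum.isCompact (𝕜 := ℂ) S
  obtain ⟨linear, mul, one, adjoint, normal, polynomial, norm⟩ :=
    bounded_stem_functional_calculus_general compact.isBounded
      ⟨hE, compact.isClosed.measurableSet, hΦ⟩ hSE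
  refine ⟨fun f g hf _ hg _ a b ξ => congr($(linear f g hf hg a b) ξ),
    fun f g hf _ hg _ ξ => congr($(mul f g hf hg) ξ), fun ξ => congr($one ξ),
    fun f hf _ u v _ _ => ?_, fun f hf _ u _ => ?_, fun n a ξ => ?_, fun f hf _ x _ => norm f hf x⟩
  · rw [adjoint f hf, ContinuousLinearMap.adjoint_inner_left]
  · rw [adjoint f hf]
    exact congr($((normal f hf).star_comm_self) u).symm
  · simpa [Polynomial.eval_finsetSum] using
      congr($(polynomial (∑ j : Fin n, .C (a j : ℂ) * .X ^ ((j : ℕ) + 1))) ξ)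
end
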